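/- Let G = F₂ × ℤ, where F₂ is the free group on generators a, b and ℤ is generated by z (equivalently, G = A(P₃) where P₃ is the path with end vertices a, b and middle vertex z). Let H be the subgroup of G generated by az and b. Then the intersection H ∩ ⟨a,b⟩ of H with the free factor F₂ = ⟨a,b⟩ is not finitely generated; indeed, H ∩ ⟨a,b⟩ is the kernel of the homomorphism H → ℤ determined by az ↦ 1 and b ↦ 0. -/

import Mathlib

/-!
Since `⟨a, b⟩ = F₂ × {0}` is the kernel of the projection to `ℤ`, only the failure of finite
generation needs an argument. Let `F₂` act on `ℚ` by `a : x ↦ 2 x` and `b : x ↦ x + 1`. An element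
of `H = ⟨az, b⟩` with `z`-exponent `k` acts as `x ↦ 2 ^ k x + t` for some `t` (`affine_of_mem`), so
`H ∩ ⟨a, b⟩` acts by translations. If it were finitely generated, the translation lengths would
have a common denominator `N`. But `(az)⁻ⁿ b (az)ⁿ` translates by `2⁻ⁿ`, for every `n`.
-/

/-- The action of `F₂` on `ℚ` in which the first generator doubles and the second adds `1`. -/
noncomputable def affineAction : FreeGroup (Fin 2) →* Equiv.Perm ℚ :=
  FreeGroup.lift ![Equiv.mulLeft₀ (2 : ℚ) two_ne_zero, Equiv.addRight (1 : ℚ)]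

lemma affineAction_zero (x : ℚ) : affineAction (FreeGroup.of 0) x = 2 * x := by
  simp [affineAction]

lemma affineAction_one (x : ℚ) : affineAction (FreeGroup.of 1) x = x + 1 := by
  simp [affineAction]

lemma affineAction_zero_pow (n : ℕ) (x : ℚ) :
    affineAction (FreeGroup.of 0 ^ n) x = 2 ^ n * x := by
  induction n with
  | zero => simp
  | succ n ih =>
    rw [pow_succ', map_mul, Equiv.Perm.mul_apply, ih, affineAction_zero]
    ring

/-- On `⟨az, b⟩` the `z`-exponent records the linear part of the affine action. -/
lemma affine_of_mem {g : FreeGroup (Fin 2) × Multiplicative ℤ}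
    (hg : g ∈ Subgroup.closure
      {((FreeGroup.of 0, Multiplicative.ofAdd 1) : FreeGroup (Fin 2) × Multiplicative ℤ),
        (FreeGroup.of 1, 1)}) :
    ∃ t : ℚ, ∀ x, affineAction g.1 x = 2 ^ (Multiplicative.toAdd g.2) * x + t := by
  induction hg using Subgroup.closure_induction with
  | mem g hg =>
    rcases hg with rfl | rfl
    · exact ⟨0, fun x => by simp [affineAction_zero]⟩
    · exact ⟨1, fun x => by simp [affineAction_one]⟩
  | one => exact ⟨0, fun x => by simp⟩
  | mul g h _ _ ihg ihh =>
    obtain ⟨s, hs⟩ := ihg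
    obtain ⟨t, ht⟩ := ihh
    refine ⟨2 ^ (Multiplicative.toAdd g.2) * t + s, fun x => ?_⟩
    rw [Prod.fst_mul, map_mul, Equiv.Perm.mul_apply, ht, hs, Prod.snd_mul, toAdd_mul,
      zpow_add₀ two_ne_zero]
    ring
  | inv g _ ih =>
    obtain ⟨t, ht⟩ := ih
    refine ⟨-(2 ^ (-Multiplicative.toAdd g.2) * t), fun x => ?_⟩
    rw [Prod.fst_inv, map_inv, Equiv.Perm.inv_eq_iff_eq, ht, Prod.snd_inv, toAdd_inv, zpow_neg]
    have : (2 : ℚ) ^ (Multiplicative.toAdd g.2) ≠ 0 := by positivity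
    field_simp
    ring

/-- The elements of `F₂ × ℤ` that act on `ℚ` as translation by an element of `(1 / N) ℤ`. -/
noncomputable def translationSubgroup (N : ℕ) :
    Subgroup (FreeGroup (Fin 2) × Multiplicative ℤ) where
  carrier := {g | ∃ m : ℤ, ∀ x, affineAction g.1 x = x + m / N}
  one_mem' := ⟨0, fun x => by simp⟩
  mul_mem' := by
    rintro g h ⟨m, hm⟩ ⟨k, hk⟩
    refine ⟨m + k, fun x => ?_⟩
    rw [Prod.fst_mul, map_mul, Equiv.Perm.mul_apply, hk, hm]
    push_cast
    ring
  inv_mem' := by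
    rintro g ⟨m, hm⟩
    refine ⟨-m, fun x => ?_⟩
    rw [Prod.fst_inv, map_inv, Equiv.Perm.inv_eq_iff_eq, hm]
    push_cast
    ring

lemma closure_eq_ker :
    Subgroup.closure
      {((FreeGroup.of 0, 1) : FreeGroup (Fin 2) × Multiplicative ℤ), (FreeGroup.of 1, 1)} =
      (MonoidHom.snd (FreeGroup (Fin 2)) (Multiplicative ℤ)).ker := by
  apply le_antisymm
  · rw [Subgroup.closure_le]
    rintro g (rfl | rfl) <;> rfl
  · rintro ⟨w, k⟩ hk
    obtain rfl : k = 1 := hk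
    induction w using FreeGroup.induction_on with
    | C1 => exact one_mem _
    | of i => fin_cases i <;> exact Subgroup.subset_closure (by simp)
    | inv_of i ih => simpa using inv_mem ih
    | mul x y hx hy => simpa using mul_mem hx hy

lemma not_fg_inf_ker :
    ¬ (Subgroup.closure
      {((FreeGroup.of 0, Multiplicative.ofAdd 1) : FreeGroup (Fin 2) × Multiplicative ℤ),
        (FreeGroup.of 1, 1)} ⊓ (MonoidHom.snd (FreeGroup (Fin 2)) (Multiplicative ℤ)).ker).FG := by
  rintro ⟨S, hS⟩
  set N : ℕ := ∏ s ∈ S, (affineAction s.1 0).den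
  have hN0 : N ≠ 0 := Finset.prod_ne_zero_iff.2 fun s _ => Rat.den_nz _
  have hle : Subgroup.closure (S : Set (FreeGroup (Fin 2) × Multiplicative ℤ)) ≤
      translationSubgroup N := by
    rw [Subgroup.closure_le]
    intro s hs
    have hsK := Subgroup.subset_closure hs
    rw [hS] at hsK
    obtain ⟨t, ht⟩ := affine_of_mem hsK.1
    have hs2 : s.2 = 1 := hsK.2
    simp only [hs2, toAdd_one, zpow_zero, one_mul] at ht
    have ht0 : affineAction s.1 0 = t := by simpa using ht 0
    obtain ⟨c, hc⟩ : t.den ∣ N := by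
      rw [← ht0]
      exact Finset.dvd_prod_of_mem (fun s => (affineAction s.1 0).den) hs
    refine ⟨t.num * c, fun x => ?_⟩
    have hc0 : (c : ℚ) ≠ 0 := by
      intro h
      rw [Nat.cast_eq_zero] at h
      simp [h] at hc
      exact hN0 hc
    rw [ht, hc]
    push_cast
    rw [mul_div_mul_right _ _ hc0, Rat.num_div_den]
  -- The generator `b` conjugated by `(az) ^ N` translates by `2⁻ᴺ`, and `2 ^ N > N`.
  set u : FreeGroup (Fin 2) × Multiplicative ℤ := (FreeGroup.of 0, Multiplicative.ofAdd 1)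
  set v : FreeGroup (Fin 2) × Multiplicative ℤ := (FreeGroup.of 1, 1) with hv
  have huH : u ∈ Subgroup.closure {u, v} := Subgroup.subset_closure (by simp)
  have hvH : v ∈ Subgroup.closure {u, v} := Subgroup.subset_closure (by simp)
  have hmem : (u ^ N)⁻¹ * v * u ^ N ∈ translationSubgroup N := by
    apply hle
    rw [hS]
    refine Subgroup.mem_inf.2 ⟨mul_mem (mul_mem (inv_mem (pow_mem huH N)) hvH) (pow_mem huH N), ?_⟩
    rw [MonoidHom.mem_ker]
    simp [hv]
  obtain ⟨m, hm⟩ := hmem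
  have h0 := hm 0
  have hNQ : (N : ℚ) ≠ 0 := by exact_mod_cast hN0
  have hfst : ((u ^ N)⁻¹ * v * u ^ N).1 =
      (FreeGroup.of 0 ^ N)⁻¹ * FreeGroup.of 1 * FreeGroup.of 0 ^ N := rfl
  rw [hfst, map_mul, map_mul, map_inv, Equiv.Perm.mul_apply, Equiv.Perm.mul_apply,
    Equiv.Perm.inv_eq_iff_eq, affineAction_zero_pow, affineAction_zero_pow, affineAction_one] at h0
  have h1 : (N : ℚ) = 2 ^ N * m := by
    field_simp at h0
    linarith
  have h2 : (N : ℤ) = 2 ^ N * m := by exact_mod_cast h1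
  have h3 : ((2 ^ N : ℕ) : ℤ) ∣ (N : ℤ) := ⟨m, by push_cast; exact h2⟩
  have h4 := Nat.le_of_dvd (Nat.pos_of_ne_zero hN0) (Int.natCast_dvd_natCast.1 h3)
  exact absurd h4 (not_le.2 Nat.lt_two_pow_self)

/-- In `G = F₂ × ℤ` (with `F₂` free on `a, b` and `ℤ` generated by `z`), let
`H = ⟨az, b⟩`. Then `H ∩ ⟨a,b⟩` is not finitely generated; indeed `H ∩ ⟨a,b⟩` is the
intersection of `H` with the kernel of the homomorphism to `ℤ` determined by `az ↦ 1` and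
`b ↦ 0` (the `z`-exponent homomorphism, i.e. projection to the second factor). -/
theorem stmt_19 (a b z : FreeGroup (Fin 2) × Multiplicative ℤ)
    (ha : a = (FreeGroup.of 0, 1)) (hb : b = (FreeGroup.of 1, 1))
    (hz : z = (1, Multiplicative.ofAdd 1)) :
    ¬ (Subgroup.closure {a * z, b} ⊓ Subgroup.closure {a, b}).FG ∧
    (MonoidHom.snd (FreeGroup (Fin 2)) (Multiplicative ℤ)) (a * z) = Multiplicative.ofAdd 1 ∧
    (MonoidHom.snd (FreeGroup (Fin 2)) (Multiplicative ℤ)) b = 1 ∧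
    Subgroup.closure {a * z, b} ⊓ Subgroup.closure {a, b} =
      Subgroup.closure {a * z, b} ⊓
        (MonoidHom.snd (FreeGroup (Fin 2)) (Multiplicative ℤ)).ker := by
  subst ha hb hz
  have haz : ((FreeGroup.of 0, 1) * (1, Multiplicative.ofAdd 1) :
      FreeGroup (Fin 2) × Multiplicative ℤ) = (FreeGroup.of 0, Multiplicative.ofAdd 1) := by
    simp
  rw [haz, closure_eq_ker]
  exact ⟨not_fg_inf_ker, rfl, rfl, rfl⟩
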